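/- (Lemma 4, direction 2) For every q ∈ Q, if a ∈ A*_q maximizes the sufficient explainable performance t̄'_g over A*_q, then the crossing set C_{2,0}(a) is empty. -/

import Mathlib

/-!
If `i ∈ Z_2`, `j ∈ Z_0` and `a i < a j`, then `a i = 0` and `a j = 1`, and exchanging these two values
gives another allocator with the same sum. The weight `sg - sb` vanishes at both `i` and `j`, so the
exchange keeps `t̄'` and hence optimality, while it raises `∑ sg * a` by `sg i - sg j = 1`,
contradicting the maximality of `a` for `t̄'_g`.
-/


open Finset

/-- `a` is a q-explainable allocator. -/
def isQAlloc (n : ℕ) (q : ℝ) (a : Fin n → ℝ) : Prop :=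
  (∀ i, a i = 0 ∨ a i = 1) ∧ (1 / (n : ℝ)) * ∑ i, a i = q

/-- Sufficient ensemble performance t̄'. -/
noncomputable def tbar (n : ℕ) (sg sb a : Fin n → ℝ) : ℝ :=
  (1 / (n : ℝ)) * ∑ i, (sg i * a i + sb i * (1 - a i))

/-- Sufficient explainable performance t̄'_g. -/
noncomputable def tbarg (n : ℕ) (sg a : Fin n → ℝ) : ℝ :=
  (1 / (n : ℝ)) * ∑ i, sg i * a i

/-- i ∈ Z_g : only the glass box is sufficient. -/
def inZg (n : ℕ) (sg sb : Fin n → ℝ) (i : Fin n) : Prop := sg i = 1 ∧ sb i = 0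

/-- i ∈ Z_b : only the black box is sufficient. -/
def inZb (n : ℕ) (sg sb : Fin n → ℝ) (i : Fin n) : Prop := sg i = 0 ∧ sb i = 1

/-- i ∈ Z_2 : both models are sufficient. -/
def inZ2 (n : ℕ) (sg sb : Fin n → ℝ) (i : Fin n) : Prop := sg i = 1 ∧ sb i = 1

/-- i ∈ Z_0 : neither model is sufficient. -/
def inZ0 (n : ℕ) (sg sb : Fin n → ℝ) (i : Fin n) : Prop := sg i = 0 ∧ sb i = 0

/-- i ∈ Z_02 = Z_0 ∪ Z_2. -/
def inZ02 (n : ℕ) (sg sb : Fin n → ℝ) (i : Fin n) : Prop :=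
  inZ0 n sg sb i ∨ inZ2 n sg sb i

/-- Membership in A*_q: a q-explainable allocator maximizing t̄' over A_q. -/
def memAstar (n : ℕ) (q : ℝ) (sg sb a : Fin n → ℝ) : Prop :=
  isQAlloc n q a ∧ ∀ b : Fin n → ℝ, isQAlloc n q b → tbar n sg sb b ≤ tbar n sg sb a

/-- Moving one unit of allocation from `j` to `i` changes a weighted sum by `f i - f j`. -/
theorem sum_mul_exchange {n : ℕ} (f a : Fin n → ℝ) (i j : Fin n) :
    ∑ k, f k * (a + Pi.single i 1 - Pi.single j 1 : Fin n → ℝ) k = ∑ k, f k * a k + f i - f j := by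
  simp [mul_add, mul_sub, Finset.sum_add_distrib, Finset.sum_sub_distrib, Pi.single_apply]

/-- Only the difference `sg - sb` couples with the allocator in `t̄'`. -/
theorem tbar_eq {n : ℕ} (sg sb a : Fin n → ℝ) :
    tbar n sg sb a = (1 / (n : ℝ)) * (∑ k, (sg k - sb k) * a k + ∑ k, sb k) := by
  rw [tbar, ← Finset.sum_add_distrib]
  congr 1
  exact Finset.sum_congr rfl fun k _ => by ring

/-- Lemma 4, direction 2: if a ∈ A*_q maximizes the sufficient explainable
performance t̄'_g over A*_q, then the crossing set C_{2,0}(a) is empty. -/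
theorem set_equivalence_two_dir2
    (n : ℕ) (hn : 1 ≤ n)
    (sg sb : Fin n → ℝ)
    (hsg : ∀ i, sg i = 0 ∨ sg i = 1) (hsb : ∀ i, sb i = 0 ∨ sb i = 1)
    (q : ℝ) (hq : ∃ k : ℕ, 1 ≤ k ∧ k ≤ n ∧ q = (k : ℝ) / n)
    (a : Fin n → ℝ) (ha : memAstar n q sg sb a)
    (hmax : ∀ b : Fin n → ℝ, memAstar n q sg sb b → tbarg n sg b ≤ tbarg n sg a) :
    ∀ i j, inZ2 n sg sb i → inZ0 n sg sb j → ¬ a i < a j := by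
  rintro i j ⟨hgi, hbi⟩ ⟨hgj, hbj⟩ hlt
  obtain ⟨⟨h01, hsum⟩, hopt⟩ := ha
  have hai : a i = 0 := by
    rcases h01 i with h | h <;> rcases h01 j with h' | h' <;> linarith
  have haj : a j = 1 := by
    rcases h01 j with h | h <;> linarith
  have hij : i ≠ j := by
    rintro rfl
    exact lt_irrefl _ hlt
  set b : Fin n → ℝ := a + Pi.single i 1 - Pi.single j 1 with hb
  have hballoc : isQAlloc n q b := by
    refine ⟨fun k => ?_, ?_⟩
    · by_cases hki : k = i
      · subst hki
        right
        simp [hb, hai, hij]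
      · by_cases hkj : k = j
        · subst hkj
          left
          simp [hb, haj, hki]
        · simpa [hb, hki, hkj] using h01 k
    · have h := sum_mul_exchange (fun _ => (1 : ℝ)) a i j
      simp only [one_mul, add_sub_cancel_right] at h
      rw [hb, h, hsum]
  have htb : tbar n sg sb b = tbar n sg sb a := by
    rw [tbar_eq, tbar_eq, hb, sum_mul_exchange (fun k => sg k - sb k), hgi, hbi, hgj, hbj]
    ring
  have hle := hmax b ⟨hballoc, fun c hc => htb ▸ hopt c hc⟩
  have hn' : (0 : ℝ) < 1 / n := by
    have : (0 : ℝ) < n := by exact_mod_cast hn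
    positivity
  rw [tbarg, tbarg, hb, sum_mul_exchange, hgi, hgj] at hle
  linarith [le_of_mul_le_mul_left hle hn']
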